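/- Let κ > 0 and ζ > 0, let w₀(x) := −(2κ/π)·arctan(x/ζ), and set r₀ := −L ∘ w₀', i.e. r₀(x) = (1/2)(ξ(x)·√(1 + ξ(x)²) + arcsinh(ξ(x))) with ξ(x) := 2κζ/(π(x² + ζ²)). Then r₀ is even, r₀(x) > 0 for every x ∈ ℝ, r₀ is strictly decreasing on (0, ∞), and r₀(x) → 0 as x → +∞. Consequently, for every α > 0 the shock-formation conditions hold at α: r₀'(α)·(r₀(α) + r₀(+∞)) < 0, r₀'(x)·r₀(α) < 0 for every x ≥ α, and r₀(+∞) = 0, where r₀(+∞) := lim_{x→+∞} r₀(x). -/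

import Mathlib

open Real Set Filter MeasureTheory

noncomputable section

/-- `L(u) = (1/2)(u·√(1+u²) + arcsinh u)`, the antiderivative of `Q(ξ) = √(1+ξ²)` with `L 0 = 0`. -/
def Lfun (u : ℝ) : ℝ := (1/2) * (u * Real.sqrt (1 + u^2) + Real.arsinh u)

/-- `û₁(η) = L⁻¹(−η/2)`. -/
def u1hat (η : ℝ) : ℝ := Function.invFun Lfun (-η/2)

/-- `k(η) = √(1 + û₁(η)²)`. -/
def kfun (η : ℝ) : ℝ := Real.sqrt (1 + (u1hat η)^2)

/-- `f(η) = k'(η)/√(k(η))`. -/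
def ffun (η : ℝ) : ℝ := deriv kfun η / Real.sqrt (kfun η)

/-- `A(t) = exp(λ t / 2)`. -/
def Afun (lam t : ℝ) : ℝ := Real.exp (lam * t / 2)

/-!
Since `L` is odd, `r₀ = L ∘ ξ`, where `ξ = -w₀'` is a Lorentzian: even, positive, decreasing on
`[0, ∞)` and vanishing at infinity. As `L` is a smooth increasing function with `L 0 = 0`, it
carries these properties of `ξ` over to `r₀`, and `r₀' = √(1 + ξ²) ξ'` has the sign of `ξ'`.
-/

lemma hasDerivAt_Lfun (u : ℝ) : HasDerivAt Lfun √(1 + u ^ 2) u := by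
  have radicand_pos : 0 < 1 + u ^ 2 := by positivity
  have sqrt_deriv : HasDerivAt (fun v : ℝ ↦ √(1 + v ^ 2)) (2 * u / (2 * √(1 + u ^ 2))) u := by
    simpa using (((hasDerivAt_id u).fun_pow 2).const_add 1).sqrt radicand_pos.ne'
  have raw_deriv :=
    (((hasDerivAt_id' u).fun_mul sqrt_deriv).fun_add (hasDerivAt_arsinh u)).const_mul (1 / 2)
  refine raw_deriv.congr_deriv ?_
  have : 0 < √(1 + u ^ 2) := sqrt_pos.mpr radicand_pos
  field_simp
  rw [sq_sqrt radicand_pos.le]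
  ring

lemma strictMono_Lfun : StrictMono Lfun :=
  strictMono_of_deriv_pos fun u ↦ by
    rw [(hasDerivAt_Lfun u).deriv]
    positivity

lemma Lfun_zero : Lfun 0 = 0 := by simp [Lfun]

lemma Lfun_neg (u : ℝ) : Lfun (-u) = -Lfun u := by
  simp only [Lfun, arsinh_neg, neg_sq]
  ring

lemma Lfun_pos {u : ℝ} (hu : 0 < u) : 0 < Lfun u :=
  Lfun_zero.symm.trans_lt (strictMono_Lfun hu)

lemma tendsto_Lfun_comp_zero {ι : Type*} {l : Filter ι} {f : ι → ℝ} (hf : Tendsto f l (nhds 0)) :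
    Tendsto (Lfun ∘ f) l (nhds 0) := by
  have Lfun_tendsto : Tendsto Lfun (nhds 0) (nhds 0) := by
    simpa only [Lfun_zero] using (hasDerivAt_Lfun 0).continuousAt.tendsto
  exact Lfun_tendsto.comp hf

lemma deriv_Lfun_comp_neg {f : ℝ → ℝ} {f' x : ℝ} (hf : HasDerivAt f f' x) (hf' : f' < 0) :
    deriv (Lfun ∘ f) x < 0 := by
  rw [((hasDerivAt_Lfun (f x)).comp x hf).deriv]
  exact mul_neg_of_pos_of_neg (by positivity) hf'

/-- The kink profile `w₀` of the twist angle, a transition of width `ζ` from `κ` at `-∞` to `-κ`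
at `+∞` when `ζ > 0`. -/
def kinkAngle (κ ζ x : ℝ) : ℝ := -(2 * κ / π) * arctan (x / ζ)

/-- The Lorentzian `ξ = -w₀'`. The sign makes it positive when `κ` and `ζ` are. -/
def kinkSlope (κ ζ x : ℝ) : ℝ := 2 * κ * ζ / (π * (x ^ 2 + ζ ^ 2))

section Kink

variable {κ ζ : ℝ}

lemma hasDerivAt_kinkAngle (hζ : ζ ≠ 0) (x : ℝ) :
    HasDerivAt (kinkAngle κ ζ) (-kinkSlope κ ζ x) x := by
  have raw_deriv := ((hasDerivAt_id' x).div_const ζ).arctan.const_mul (-(2 * κ / π))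
  refine raw_deriv.congr_deriv ?_
  have : 0 < 1 + (x / ζ) ^ 2 := by positivity
  have : 0 < x ^ 2 + ζ ^ 2 := by positivity
  rw [kinkSlope]
  field_simp
  ring

lemma neg_Lfun_deriv_kinkAngle (hζ : ζ ≠ 0) (x : ℝ) :
    -Lfun (deriv (kinkAngle κ ζ) x) = Lfun (kinkSlope κ ζ x) := by
  rw [(hasDerivAt_kinkAngle hζ x).deriv, Lfun_neg, neg_neg]

lemma kinkSlope_neg (x : ℝ) : kinkSlope κ ζ (-x) = kinkSlope κ ζ x := by
  simp only [kinkSlope, neg_sq]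

lemma kinkSlope_pos (h : 0 < κ * ζ) (x : ℝ) : 0 < kinkSlope κ ζ x := by
  have : ζ ≠ 0 := right_ne_zero_of_mul h.ne'
  have numer_pos : 0 < 2 * κ * ζ := by linarith
  exact div_pos numer_pos (by positivity)

lemma strictAntiOn_kinkSlope (h : 0 < κ * ζ) : StrictAntiOn (kinkSlope κ ζ) (Ici 0) := by
  intro x (hx : 0 ≤ x) y _ hxy
  have : ζ ≠ 0 := right_ne_zero_of_mul h.ne'
  have numer_pos : 0 < 2 * κ * ζ := by linarith
  simp only [kinkSlope]
  gcongr

lemma tendsto_kinkSlope_atTop : Tendsto (kinkSlope κ ζ) atTop (nhds 0) :=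
  ((tendsto_atTop_add_const_right _ _ (tendsto_pow_atTop two_ne_zero)).const_mul_atTop
    pi_pos).const_div_atTop _

lemma hasDerivAt_kinkSlope (hζ : ζ ≠ 0) (x : ℝ) :
    HasDerivAt (kinkSlope κ ζ) (-(2 * x / (x ^ 2 + ζ ^ 2)) * kinkSlope κ ζ x) x := by
  have denom_pos : 0 < π * (x ^ 2 + ζ ^ 2) := by positivity
  have denom_deriv : HasDerivAt (fun y : ℝ ↦ π * (y ^ 2 + ζ ^ 2)) (π * (2 * x)) x := by
    simpa using (((hasDerivAt_id x).fun_pow 2).add_const (ζ ^ 2)).const_mul π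
  refine ((hasDerivAt_const x (2 * κ * ζ)).fun_div denom_deriv denom_pos.ne').congr_deriv ?_
  rw [kinkSlope]
  field_simp
  ring

lemma deriv_Lfun_comp_kinkSlope_neg (h : 0 < κ * ζ) {x : ℝ} (hx : 0 < x) :
    deriv (Lfun ∘ kinkSlope κ ζ) x < 0 := by
  refine deriv_Lfun_comp_neg (hasDerivAt_kinkSlope (right_ne_zero_of_mul h.ne') x) ?_
  exact mul_neg_of_neg_of_pos (neg_neg_of_pos (by positivity)) (kinkSlope_pos h x)

end Kink

/-- for the kink initial profile `w₀(x) = −(2κ/π)·arctan(x/ζ)`, the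
initial Riemann function `r₀ = −L ∘ w₀'` is even, positive, strictly decreasing on
`(0,∞)`, tends to `0` at `+∞`, and satisfies the shock-formation conditions at
every `α > 0`. -/
theorem kink_profile_shock_conditions
    (κ ζ : ℝ) (hκ : 0 < κ) (hζ : 0 < ζ)
    (w₀ r₀ : ℝ → ℝ)
    (hw₀ : ∀ x : ℝ, w₀ x = -(2*κ/Real.pi) * Real.arctan (x/ζ))
    (hr₀ : ∀ x : ℝ, r₀ x = -Lfun (deriv w₀ x)) :
    (∀ x : ℝ, r₀ x = (1/2) * (2*κ*ζ/(Real.pi*(x^2+ζ^2)) *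
        Real.sqrt (1 + (2*κ*ζ/(Real.pi*(x^2+ζ^2)))^2)
        + Real.arsinh (2*κ*ζ/(Real.pi*(x^2+ζ^2))))) ∧
    (∀ x : ℝ, r₀ (-x) = r₀ x) ∧
    (∀ x : ℝ, 0 < r₀ x) ∧
    StrictAntiOn r₀ (Set.Ioi 0) ∧
    Filter.Tendsto r₀ Filter.atTop (nhds 0) ∧
    (∀ α : ℝ, 0 < α →
      deriv r₀ α * (r₀ α + 0) < 0 ∧
      (∀ x : ℝ, α ≤ x → deriv r₀ x * r₀ α < 0)) := by
  obtain rfl : w₀ = kinkAngle κ ζ := funext hw₀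
  obtain rfl : r₀ = Lfun ∘ kinkSlope κ ζ :=
    funext fun x ↦ (hr₀ x).trans (neg_Lfun_deriv_kinkAngle hζ.ne' x)
  have hκζ : 0 < κ * ζ := mul_pos hκ hζ
  have r₀_pos (x : ℝ) : 0 < Lfun (kinkSlope κ ζ x) := Lfun_pos (kinkSlope_pos hκζ x)
  refine ⟨fun _ ↦ rfl, fun x ↦ congrArg Lfun (kinkSlope_neg x), r₀_pos, ?_,
    tendsto_Lfun_comp_zero tendsto_kinkSlope_atTop, fun α hα ↦ ⟨?_, fun x hx ↦ ?_⟩⟩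
  · exact strictMono_Lfun.comp_strictAntiOn
      ((strictAntiOn_kinkSlope hκζ).mono Ioi_subset_Ici_self)
  · rw [add_zero]
    exact mul_neg_of_neg_of_pos (deriv_Lfun_comp_kinkSlope_neg hκζ hα) (r₀_pos α)
  · have hx_pos : 0 < x := hα.trans_le hx
    exact mul_neg_of_neg_of_pos (deriv_Lfun_comp_kinkSlope_neg hκζ hx_pos) (r₀_pos α)
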